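/- (Generic fibre of the map of Theorem B for n = 1 is a circle.) Let M be a 3×3 complex Hermitian positive semidefinite matrix with tr M = 2, det M = 0, and such that the characteristic polynomial of M has three distinct roots. Then the set F = { (P, Q) ∈ P₁ × P₁ : P + Q = M }, topologized as a subspace of pairs of 3×3 complex matrices, is homeomorphic to the circle S¹ (the unit sphere in ℝ²). -/

import Mathlib

/-!
Conjugating by a unitary that diagonalizes `M`, one may take `M = diag(a, b, 0)` with `a, b > 0`,
`a + b = 2` and `a ≠ b`. If `P + Q = M` with `P`, `Q` rank-one projections, the last diagonal entry
forces both to be supported on the upper left `2 × 2` block. Write `p = P 0 0`. The two blocks have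
trace `1`, determinant `0` and opposite off-diagonal entries, so
`p (1 - p) = |P 0 1|² = (a - p) (1 - (a - p))`; since `a ≠ 1` this gives `p = a / 2`
(`exists_circleProj`). Hence `|P 0 1|² = a b / 4` and the only freedom is the phase `w` of `P 0 1`;
conversely each phase occurs, with `Q` given by the phase `-w` (`circleProj_mem`,
`circleProj_add`). The resulting continuous bijection from the compact circle to the Hausdorff
fibre is a homeomorphism.
-/

open scoped ComplexOrder

/-- The model `P₁` of the complex projective plane `CP²`: the rank-one Hermitian
orthogonal projections `X(x) i j = x i * conj (x j)`, `x` a unit vector of `ℂ³`. -/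
def P1 : Set (Matrix (Fin 3) (Fin 3) ℂ) :=
  { M | ∃ x : Fin 3 → ℂ, (∑ i, ‖x i‖ ^ 2) = 1 ∧ ∀ i j, M i j = x i * starRingEnd ℂ (x j) }

open Matrix ComplexConjugate

theorem mem_P1_iff (P : Matrix (Fin 3) (Fin 3) ℂ) :
    P ∈ P1 ↔ ∃ x : Fin 3 → ℂ, star x ⬝ᵥ x = 1 ∧ P = vecMulVec x (star x) := by
  have h : ∀ x : Fin 3 → ℂ, (∑ i, ‖x i‖ ^ 2 = 1 ↔ star x ⬝ᵥ x = 1) := by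
    intro x
    have : star x ⬝ᵥ x = ((∑ i, ‖x i‖ ^ 2 : ℝ) : ℂ) := by
      simp [dotProduct, Complex.conj_mul']
    rw [this]
    norm_cast
  constructor
  · rintro ⟨x, hx, hP⟩
    exact ⟨x, (h x).1 hx, by ext i j; simpa [vecMulVec_apply] using hP i j⟩
  · rintro ⟨x, hx, rfl⟩
    exact ⟨x, (h x).2 hx, fun i j => by simp [vecMulVec_apply]⟩

theorem conj_mem_P1 {U P : Matrix (Fin 3) (Fin 3) ℂ} (hU : Uᴴ * U = 1) (hP : P ∈ P1) :
    U * P * Uᴴ ∈ P1 := by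
  rw [mem_P1_iff] at hP ⊢
  obtain ⟨x, hx, rfl⟩ := hP
  refine ⟨U *ᵥ x, ?_, ?_⟩
  · rw [star_mulVec, dotProduct_mulVec, vecMul_vecMul, hU, vecMul_one, hx]
  · rw [mul_vecMulVec, vecMulVec_mul, star_mulVec]

/-- The rank-one projection onto the line spanned by
`(√(a/2), conj w * √(b/2), 0)`, for `a + b = 2` and `‖w‖ = 1`. -/
noncomputable def circleProj (a b : ℝ) (w : ℂ) : Matrix (Fin 3) (Fin 3) ℂ :=
  !![(a / 2 : ℂ), (√(a / 2) * √(b / 2) : ℝ) * w, 0;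
     (√(a / 2) * √(b / 2) : ℝ) * conj w, (b / 2 : ℂ), 0;
     0, 0, 0]

theorem circleProj_mem {a b : ℝ} (ha : 0 < a) (hb : 0 < b) (hab : a + b = 2) {w : ℂ}
    (hw : ‖w‖ = 1) : circleProj a b w ∈ P1 := by
  have h1 : √(a / 2) ^ 2 = a / 2 := Real.sq_sqrt (by positivity)
  have h2 : √(b / 2) ^ 2 = b / 2 := Real.sq_sqrt (by positivity)
  have hww : w * conj w = 1 := by rw [Complex.mul_conj']; simp [hw]
  unfold circleProj
  generalize √(a / 2) = u at *
  generalize √(b / 2) = v at *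
  have h1' : (u : ℂ) * u = a / 2 := by rw [← sq]; exact_mod_cast h1
  have h2' : (v : ℂ) * v = b / 2 := by rw [← sq]; exact_mod_cast h2
  refine ⟨![(u : ℂ), conj w * v, 0], ?_, ?_⟩
  · simp [Fin.sum_univ_three, hw, h1, h2]
    linarith
  · intro i j
    fin_cases i <;> fin_cases j <;> simp
    · exact h1'.symm
    · ring
    · ring
    · linear_combination (-1 : ℂ) * h2' - (v : ℂ) * v * hww

theorem circleProj_add {a b : ℝ} (w : ℂ) :
    circleProj a b w + circleProj a b (-w) = diagonal ![(a : ℂ), b, 0] := by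
  ext i j
  fin_cases i <;> fin_cases j <;> simp [circleProj]

theorem circleProj_injective {a b : ℝ} (ha : 0 < a) (hb : 0 < b) :
    Function.Injective (circleProj a b) := by
  intro w w' h
  have h01 := congrFun (congrFun h 0) 1
  have : √(a / 2) * √(b / 2) ≠ 0 := by positivity
  simpa [circleProj, this, ha.ne', hb.ne', Real.sqrt_eq_zero', not_le.2 ha, not_le.2 hb] using h01

theorem continuous_circleProj (a b : ℝ) : Continuous (circleProj a b) := by
  refine continuous_matrix fun i j => ?_
  fin_cases i <;> fin_cases j <;> simp [circleProj] <;> fun_prop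

/-- The trace and determinant of the upper left `2 × 2` blocks of `P` and `diag(a, b, 0) - P`
force `P 0 0 = a / 2`; only the phase of `P 0 1` is then free. -/
theorem exists_circleProj {a b : ℝ} (ha : 0 < a) (hb : 0 < b) (hab : a + b = 2) (hne : a ≠ b)
    {P Q : Matrix (Fin 3) (Fin 3) ℂ} (hP : P ∈ P1) (hQ : Q ∈ P1)
    (hPQ : P + Q = diagonal ![(a : ℂ), b, 0]) :
    ∃ w : ℂ, ‖w‖ = 1 ∧ P = circleProj a b w := by
  obtain ⟨x, hx, hP⟩ := hP
  obtain ⟨y, hy, hQ⟩ := hQ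
  have key : ∀ i j, x i * conj (x j) + y i * conj (y j) = diagonal ![(a : ℂ), b, 0] i j := by
    intro i j; rw [← hPQ, Matrix.add_apply, hP, hQ]
  rw [Fin.sum_univ_three] at hx hy
  have e22 : ‖x 2‖ ^ 2 + ‖y 2‖ ^ 2 = 0 := by
    have := key 2 2
    simp only [Complex.mul_conj'] at this
    simp at this
    exact_mod_cast this
  have e00 : ‖x 0‖ ^ 2 + ‖y 0‖ ^ 2 = a := by
    have := key 0 0
    simp only [Complex.mul_conj'] at this
    simp at this
    exact_mod_cast this
  have x2 : ‖x 2‖ ^ 2 = 0 := by nlinarith [sq_nonneg ‖x 2‖, sq_nonneg ‖y 2‖]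
  have y2 : ‖y 2‖ ^ 2 = 0 := by nlinarith [sq_nonneg ‖x 2‖, sq_nonneg ‖y 2‖]
  have hx2 : x 2 = 0 := by simpa using x2
  have e01 : ‖x 0‖ ^ 2 * ‖x 1‖ ^ 2 = ‖y 0‖ ^ 2 * ‖y 1‖ ^ 2 := by
    have := key 0 1
    simp at this
    have h := congrArg norm (eq_neg_of_add_eq_zero_left this)
    simp at h
    rw [← mul_pow, h, mul_pow]
  have ha1 : 1 - a ≠ 0 := fun h => hne (by linarith)
  have p0 : ‖x 0‖ ^ 2 = a / 2 := by
    have hx1 : ‖x 1‖ ^ 2 = 1 - ‖x 0‖ ^ 2 := by linarith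
    have hy0 : ‖y 0‖ ^ 2 = a - ‖x 0‖ ^ 2 := by linarith
    have hy1 : ‖y 1‖ ^ 2 = 1 - (a - ‖x 0‖ ^ 2) := by linarith
    rw [hx1, hy1, hy0] at e01
    apply mul_left_cancel₀ ha1
    linarith
  have p1 : ‖x 1‖ ^ 2 = b / 2 := by linarith
  have n0 : √(a / 2) = ‖x 0‖ := by rw [← p0, Real.sqrt_sq (norm_nonneg _)]
  have n1 : √(b / 2) = ‖x 1‖ := by rw [← p1, Real.sqrt_sq (norm_nonneg _)]
  have z0 : ‖x 0‖ ≠ 0 := by intro h; rw [h] at p0; norm_num at p0; linarith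
  have z1 : ‖x 1‖ ≠ 0 := by intro h; rw [h] at p1; norm_num at p1; linarith
  have z0' : (‖x 0‖ : ℂ) ≠ 0 := by exact_mod_cast z0
  have z1' : (‖x 1‖ : ℂ) ≠ 0 := by exact_mod_cast z1
  refine ⟨x 0 * conj (x 1) / (‖x 0‖ * ‖x 1‖), ?_, ?_⟩
  · rw [norm_div, norm_mul, norm_mul, RCLike.norm_conj, Complex.norm_real, Complex.norm_real,
      norm_norm, norm_norm, div_self (mul_ne_zero z0 z1)]
  · ext i j
    rw [hP]
    fin_cases i <;> fin_cases j <;> simp [circleProj, n0, n1, hx2]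
    · rw [Complex.mul_conj']; exact_mod_cast p0
    · field_simp
    · field_simp
    · rw [Complex.mul_conj']; exact_mod_cast p1

/-- Distinctness of the eigenvalues makes the zero eigenvalue simple, so that `a` and `b` are
positive. -/
theorem exists_diagonalization (M : Matrix (Fin 3) (Fin 3) ℂ)
    (hpsd : M.PosSemidef) (htr : M.trace = 2) (hdet : M.det = 0)
    (hroots : M.charpoly.roots.toFinset.card = 3) :
    ∃ (U : Matrix (Fin 3) (Fin 3) ℂ) (a b : ℝ), 0 < a ∧ 0 < b ∧ a + b = 2 ∧ a ≠ b ∧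
      Uᴴ * U = 1 ∧ U * Uᴴ = 1 ∧ M = U * diagonal ![(a : ℂ), b, 0] * Uᴴ := by
  have hM := hpsd.1
  have hinj : Function.Injective hM.eigenvalues := by
    rw [hM.roots_charpoly_eq_eigenvalues] at hroots
    have h : (Finset.univ.image (RCLike.ofReal ∘ hM.eigenvalues : Fin 3 → ℂ)).card
        = (Finset.univ : Finset (Fin 3)).card := by
      simpa [Finset.image] using hroots
    have := Finset.card_image_iff.1 h
    rw [Finset.coe_univ, Set.injOn_univ] at this
    exact this.of_comp
  obtain ⟨k, hk⟩ : ∃ k, hM.eigenvalues k = 0 := by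
    rw [hM.det_eq_prod_eigenvalues, Finset.prod_eq_zero_iff] at hdet
    obtain ⟨k, -, hk⟩ := hdet
    exact ⟨k, by simpa using hk⟩
  -- The transposition moving the zero eigenvalue to the last place.
  let σ : Equiv.Perm (Fin 3) := Equiv.swap 2 k
  let e : Fin 3 → ℝ := fun i => hM.eigenvalues (σ i)
  have he : Function.Injective e := hinj.comp σ.injective
  have he2 : e 2 = 0 := by simp [e, σ, hk]
  have hpos : ∀ i, i ≠ 2 → 0 < e i := fun i hi =>
    lt_of_le_of_ne (hpsd.eigenvalues_nonneg _) fun h => hi (he (by rw [← h, he2]))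
  have hsum : e 0 + e 1 = 2 := by
    have h1 : ∑ i, e i = ∑ i, hM.eigenvalues i := Equiv.sum_comp σ _
    rw [hM.trace_eq_sum_eigenvalues] at htr
    have h2 : ∑ i, hM.eigenvalues i = 2 := by
      have : ((∑ i, hM.eigenvalues i : ℝ) : ℂ) = 2 := by simpa using htr
      exact_mod_cast this
    rw [Fin.sum_univ_three, he2, h2] at h1
    linarith
  let V : Matrix (Fin 3) (Fin 3) ℂ := hM.eigenvectorUnitary
  have hV : Vᴴ * V = 1 := Unitary.coe_star_mul_self hM.eigenvectorUnitary
  have hU : (V.submatrix id σ)ᴴ * V.submatrix id σ = 1 := by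
    rw [conjTranspose_submatrix, ← submatrix_mul _ _ _ _ _ Function.bijective_id, hV]
    simp
  refine ⟨V.submatrix id σ, e 0, e 1, hpos 0 (by decide), hpos 1 (by decide), hsum,
    fun h => absurd (he h) (by decide), hU, mul_eq_one_comm.1 hU, ?_⟩
  have hd : diagonal ![(e 0 : ℂ), e 1, 0]
      = (diagonal (RCLike.ofReal ∘ hM.eigenvalues) : Matrix _ _ ℂ).submatrix σ σ := by
    rw [submatrix_diagonal_equiv]
    congr 1
    ext i
    fin_cases i
    · rfl
    · rfl
    · change (0 : ℂ) = ((e 2 : ℝ) : ℂ)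
      rw [he2, Complex.ofReal_zero]
  rw [hd, conjTranspose_submatrix, ← submatrix_mul _ _ _ _ _ σ.bijective,
    ← submatrix_mul _ _ _ _ _ σ.bijective, submatrix_id_id]
  exact hM.spectral_theorem

/-- The generic fibre of the map of Theorem B for `n = 1` is a circle: if `M` is
Hermitian positive semidefinite with trace `2`, determinant `0`, and three distinct
eigenvalues (roots of its characteristic polynomial), then
`{(P, Q) ∈ P₁ × P₁ | P + Q = M}` is homeomorphic to the circle `S¹`. -/
theorem generic_fibre_is_circle (M : Matrix (Fin 3) (Fin 3) ℂ)
    (hpsd : M.PosSemidef) (htr : M.trace = 2) (hdet : M.det = 0)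
    (hroots : M.charpoly.roots.toFinset.card = 3) :
    Nonempty
      (↥{pq : Matrix (Fin 3) (Fin 3) ℂ × Matrix (Fin 3) (Fin 3) ℂ |
          pq.1 ∈ P1 ∧ pq.2 ∈ P1 ∧ pq.1 + pq.2 = M}
        ≃ₜ Metric.sphere (0 : EuclideanSpace ℝ (Fin 2)) 1) := by
  obtain ⟨U, a, b, ha, hb, hab, hne, hU, hU', rfl⟩ :=
    exists_diagonalization M hpsd htr hdet hroots
  let S := Metric.sphere (0 : EuclideanSpace ℝ (Fin 2)) 1
  let φ : S → ℂ := fun s => ⟨s.1 0, s.1 1⟩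
  have hφ : Continuous φ := by
    have : φ = fun s : S => ((s.1 0 : ℝ) : ℂ) + ((s.1 1 : ℝ) : ℂ) * Complex.I := by
      ext s; simp [φ, Complex.mk_eq_add_mul_I]
    rw [this]
    fun_prop
  have hφ1 : ∀ s, ‖φ s‖ = 1 := by
    intro s
    have h : ‖s.1‖ = 1 := by simp
    rw [EuclideanSpace.norm_eq, Fin.sum_univ_two] at h
    rw [Complex.norm_eq_sqrt_sq_add_sq]
    simpa using h
  have cancel : ∀ A : Matrix (Fin 3) (Fin 3) ℂ, Uᴴ * (U * A * Uᴴ) * U = A := by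
    intro A
    calc _ = (Uᴴ * U) * A * (Uᴴ * U) := by simp only [Matrix.mul_assoc]
      _ = A := by rw [hU]; simp
  have cancel' : ∀ A : Matrix (Fin 3) (Fin 3) ℂ, U * (Uᴴ * A * U) * Uᴴ = A := by
    intro A
    calc _ = (U * Uᴴ) * A * (U * Uᴴ) := by simp only [Matrix.mul_assoc]
      _ = A := by rw [hU']; simp
  have back : ∀ {A : Matrix (Fin 3) (Fin 3) ℂ}, A ∈ P1 → Uᴴ * A * U ∈ P1 := by
    intro A hA
    simpa using conj_mem_P1 (U := Uᴴ) (by simpa using hU') hA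
  let f : S → {pq : Matrix (Fin 3) (Fin 3) ℂ × Matrix (Fin 3) (Fin 3) ℂ |
      pq.1 ∈ P1 ∧ pq.2 ∈ P1 ∧ pq.1 + pq.2 = U * diagonal ![(a : ℂ), b, 0] * Uᴴ} := fun s =>
    ⟨(U * circleProj a b (φ s) * Uᴴ, U * circleProj a b (-φ s) * Uᴴ),
      conj_mem_P1 hU (circleProj_mem ha hb hab (hφ1 s)),
      conj_mem_P1 hU (circleProj_mem ha hb hab (by rw [norm_neg, hφ1 s])),
      by rw [← Matrix.add_mul, ← Matrix.mul_add, circleProj_add]⟩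
  have hc := continuous_circleProj a b
  have hf : Continuous f := by
    refine Continuous.subtype_mk (Continuous.prodMk ?_ ?_) _
    · exact (continuous_const.matrix_mul (hc.comp hφ)).matrix_mul continuous_const
    · exact (continuous_const.matrix_mul (hc.comp hφ.neg)).matrix_mul continuous_const
  have hbij : Function.Bijective f := by
    constructor
    · intro s t hst
      have h1 : U * circleProj a b (φ s) * Uᴴ = U * circleProj a b (φ t) * Uᴴ :=
        congrArg (fun z => z.1.1) hst
      have h2 : φ s = φ t := circleProj_injective ha hb (by
        rw [← cancel (circleProj a b (φ s)), h1, cancel])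
      ext i
      fin_cases i
      · exact congrArg Complex.re h2
      · exact congrArg Complex.im h2
    · rintro ⟨⟨P, Q⟩, hP, hQ, hPQ⟩
      dsimp only at hP hQ hPQ
      obtain ⟨w, hw, hPw⟩ := exists_circleProj ha hb hab hne (back hP) (back hQ)
        (by rw [← Matrix.add_mul, ← Matrix.mul_add, hPQ, cancel])
      have hs : (!₂[w.re, w.im] : EuclideanSpace ℝ (Fin 2)) ∈ S := by
        rw [mem_sphere_zero_iff_norm, EuclideanSpace.norm_eq, Fin.sum_univ_two]
        rw [Complex.norm_eq_sqrt_sq_add_sq] at hw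
        simpa using hw
      have hP' : U * circleProj a b w * Uᴴ = P := by rw [← hPw, cancel']
      refine ⟨⟨_, hs⟩, Subtype.ext (Prod.ext hP' ?_)⟩
      change U * circleProj a b (-w) * Uᴴ = Q
      rw [← add_right_inj (U * circleProj a b w * Uᴴ), ← Matrix.add_mul, ← Matrix.mul_add,
        circleProj_add, ← hPQ, hP']
  exact ⟨(hf.homeoOfEquivCompactToT2 (f := Equiv.ofBijective f hbij)).symm⟩
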